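/- Let N ≥ 1, let x₀ ∈ ℝ^N, δ > 0, and consider the mesh of hypercubes determined by the lattice 𝒵 = {x₀ + δζ : ζ ∈ ℤ^N}: for ζ ∈ ℤ^N let C_ζ be the hypercube with vertices x₀ + δ(ζ + γ), γ ∈ {0,1}^N. Let f be a real-valued function defined on 𝒵. Then for any ζ, ζ' ∈ ℤ^N and any x ∈ C_ζ ∩ C_{ζ'}, one has Λ(f, C_ζ)(x) = Λ(f, C_{ζ'})(x); that is, the coordinatewise affine interpolation functions of the mesh hypercubes agree on overlaps, so they define a single function on the union of the hypercubes. -/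

import Mathlib

/-- The coordinatewise affine interpolation `Λ(f,C)` of `f` on the hypercube with
vertices `v_γ = w + δγ`, `γ ∈ {0,1}^N`. -/
noncomputable def interpLam {N : ℕ} (w : Fin N → ℝ) (δ : ℝ) (f : (Fin N → ℝ) → ℝ)
    (x : Fin N → ℝ) : ℝ :=
  ∑ γ : Fin N → Bool,
    (∏ i, if γ i then (x i - w i) / δ else 1 - (x i - w i) / δ) *
      f (fun i => w i + if γ i then δ else 0)

/-!
On every cell containing `x`, the coordinatewise affine interpolation is the restriction of one and
the same function, the expansion of `f` in tensor products of hat functions centred at the lattice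
points: on a cell, only the hat functions centred at its vertices survive, and there each of their
one-dimensional factors is affine. Hence any two cells give the same value at a common point.
-/

section HatFunction

variable {K : Type*} [Ring K] [LinearOrder K]

/-- The piecewise affine hat function of finite element theory, with peak `1` at `0` and support in
`[-1, 1]`. Its integer translates are the nodal basis for affine interpolation on `ℤ`. -/
def hat (t : K) : K :=
  max 0 (1 - |t|)

variable [IsStrictOrderedRing K]

theorem hat_eq_zero_of_one_le_abs {t : K} (ht : 1 ≤ |t|) : hat t = 0 :=
  max_eq_left (sub_nonpos.2 ht)

theorem hat_eq_one_sub_abs_of_abs_le_one {t : K} (ht : |t| ≤ 1) : hat t = 1 - |t| :=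
  max_eq_right (sub_nonneg.2 ht)

theorem hat_sub_intCast_eq_zero {t : K} {m n : ℤ} (ht : t ∈ Set.Icc (m : K) (m + 1))
    (hm : n ≠ m) (hm_succ : n ≠ m + 1) : hat (t - n) = 0 := by
  apply hat_eq_zero_of_one_le_abs
  rcases lt_or_gt_of_ne hm with hlt | hgt
  · have hn : (n : K) + 1 ≤ m := by exact_mod_cast hlt
    exact le_abs.2 (Or.inl (le_sub_iff_add_le'.2 (hn.trans ht.1)))
  · have hn : (m : K) + 1 + 1 ≤ n := by exact_mod_cast (show m + 1 + 1 ≤ n by lia)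
    refine le_abs.2 (Or.inr ?_)
    rw [neg_sub]
    exact le_sub_iff_add_le'.2 ((add_le_add_left ht.2 1).trans hn)

theorem hat_sub_intCast_endpoint {t : K} {m : ℤ} (ht : t ∈ Set.Icc (m : K) (m + 1)) (b : Bool) :
    hat (t - (m + if b then 1 else 0 : ℤ)) = if b then t - m else 1 - (t - m) := by
  have h0 : 0 ≤ t - m := sub_nonneg.2 ht.1
  have h1 : t - m ≤ 1 := sub_le_iff_le_add'.2 ht.2
  cases b with
  | false =>
    have habs : |t - m| = t - m := abs_of_nonneg h0
    simp [hat_eq_one_sub_abs_of_abs_le_one (habs.trans_le h1), habs]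
  | true =>
    have habs : |t - (m + 1)| = 1 - (t - m) := by
      rw [abs_sub_comm, abs_of_nonneg (sub_nonneg.2 ht.2)]
      abel
    have hle : |t - (m + 1)| ≤ 1 := habs.trans_le (sub_le_self 1 h0)
    simp [hat_eq_one_sub_abs_of_abs_le_one hle, habs]

end HatFunction

section CellVertex

variable {ι : Type*}

/-- The vertex `ζ + γ` of the unit cell of `ℤ^ι` with lowest corner `ζ`; the Boolean vector `γ`
stands for an element of `{0,1}^ι`. -/
def cellVertex (ζ : ι → ℤ) (γ : ι → Bool) : ι → ℤ :=
  fun i => ζ i + if γ i then 1 else 0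

theorem cellVertex_injective (ζ : ι → ℤ) : Function.Injective (cellVertex ζ) := by
  intro γ γ' h
  funext i
  have hi : (ζ i + if γ i then 1 else 0) = ζ i + if γ' i then 1 else 0 := congrFun h i
  cases hγ : γ i <;> cases hγ' : γ' i <;> simp [hγ, hγ'] at hi ⊢

theorem exists_ne_of_notMem_range_cellVertex {ζ η : ι → ℤ} (h : η ∉ Set.range (cellVertex ζ)) :
    ∃ i, η i ≠ ζ i ∧ η i ≠ ζ i + 1 := by
  contrapose! h
  refine ⟨fun i => decide (η i ≠ ζ i), funext fun i => ?_⟩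
  by_cases hi : η i = ζ i
  · simp [cellVertex, hi]
  · simp [cellVertex, h i hi]

end CellVertex

section TensorHat

variable {ι K M : Type*} [Fintype ι] [CommRing K] [LinearOrder K] [IsStrictOrderedRing K]
  [AddCommMonoid M] [Module K M]

theorem prod_hat_eq_zero_of_notMem_range_cellVertex {t : ι → K} {ζ η : ι → ℤ}
    (ht : ∀ i, t i ∈ Set.Icc (ζ i : K) (ζ i + 1)) (h : η ∉ Set.range (cellVertex ζ)) :
    ∏ i, hat (t i - η i) = 0 := by
  obtain ⟨i, hi, hi_succ⟩ := exists_ne_of_notMem_range_cellVertex h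
  exact Finset.prod_eq_zero (Finset.mem_univ i) (hat_sub_intCast_eq_zero (ht i) hi hi_succ)

theorem finsum_prod_hat_smul_eq_sum_cellVertex [DecidableEq ι] {t : ι → K} {ζ : ι → ℤ}
    (ht : ∀ i, t i ∈ Set.Icc (ζ i : K) (ζ i + 1)) (g : (ι → ℤ) → M) :
    ∑ᶠ η : ι → ℤ, (∏ i, hat (t i - η i)) • g η =
      ∑ γ : ι → Bool,
        (∏ i, if γ i then t i - ζ i else 1 - (t i - ζ i)) • g (cellVertex ζ γ) := by
  have hsupport : (Function.support fun η : ι → ℤ => (∏ i, hat (t i - η i)) • g η) ⊆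
      (Finset.univ.map ⟨cellVertex ζ, cellVertex_injective ζ⟩ : Finset (ι → ℤ)) := by
    intro η hη
    by_contra hmem
    have hrange : η ∉ Set.range (cellVertex ζ) := by simpa using hmem
    exact hη (by simp only [prod_hat_eq_zero_of_notMem_range_cellVertex ht hrange, zero_smul])
  rw [finsum_eq_finsetSum_of_support_subset _ hsupport, Finset.sum_map]
  refine Finset.sum_congr rfl fun γ _ => congrArg (· • g (cellVertex ζ γ)) ?_
  exact Finset.prod_congr rfl fun i _ => hat_sub_intCast_endpoint (ht i) (γ i)

end TensorHat

section BoxInterpolation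

variable {ι K M : Type*} [Fintype ι] [Field K] [AddCommMonoid M] [Module K M]

/-- The coordinatewise affine interpolation of `f` on the box with lowest corner `w` and side
lengths `δ i`. It extends `interpLam` to boxes with unequal sides over a field, and to values in a
module. -/
def boxInterp [DecidableEq ι] (w δ : ι → K) (f : (ι → K) → M) (x : ι → K) : M :=
  ∑ γ : ι → Bool,
    (∏ i, if γ i then (x i - w i) / δ i else 1 - (x i - w i) / δ i) •
      f (fun i => w i + if γ i then δ i else 0)

variable [LinearOrder K]

/-- The expansion of `f` in the tensor-product hat functions of the lattice
`{x₀ + δζ : ζ ∈ ℤ^ι}`: a single function on the whole space that restricts to the interpolation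
on each cell. -/
noncomputable def latticeInterp (x₀ δ : ι → K) (f : (ι → K) → M) (x : ι → K) : M :=
  ∑ᶠ η : ι → ℤ, (∏ i, hat ((x i - x₀ i) / δ i - η i)) • f (fun i => x₀ i + δ i * η i)

variable [IsStrictOrderedRing K]

theorem sub_div_mem_Icc_intCast {a d x : K} {m : ℤ} (hd : 0 < d)
    (hx : x ∈ Set.Icc (a + d * m) (a + d * m + d)) : (x - a) / d ∈ Set.Icc (m : K) (m + 1) := by
  rw [Set.mem_Icc, le_div_iff₀ hd, div_le_iff₀ hd]
  constructor <;> linarith [hx.1, hx.2]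

theorem boxInterp_eq_latticeInterp [DecidableEq ι] (x₀ : ι → K) {δ : ι → K} (hδ : ∀ i, 0 < δ i)
    (f : (ι → K) → M) (ζ : ι → ℤ) {x : ι → K}
    (hx : ∀ i, x i ∈ Set.Icc (x₀ i + δ i * ζ i) (x₀ i + δ i * ζ i + δ i)) :
    boxInterp (fun i => x₀ i + δ i * ζ i) δ f x = latticeInterp x₀ δ f x := by
  have hcoord (i : ι) : (x i - (x₀ i + δ i * ζ i)) / δ i = (x i - x₀ i) / δ i - ζ i := by
    rw [← sub_sub, sub_div, mul_div_cancel_left₀ _ (hδ i).ne']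
  have hvertex (γ : ι → Bool) : (fun i => x₀ i + δ i * ζ i + if γ i then δ i else 0) =
      fun i => x₀ i + δ i * (cellVertex ζ γ i : K) := by
    funext i
    cases hγ : γ i <;> simp [cellVertex, hγ, mul_add, add_assoc]
  simp only [boxInterp, latticeInterp, hcoord, hvertex]
  exact (finsum_prod_hat_smul_eq_sum_cellVertex (fun i => sub_div_mem_Icc_intCast (hδ i) (hx i))
    fun η => f fun i => x₀ i + δ i * η i).symm

theorem statement18_general [DecidableEq ι] (x₀ : ι → K) {δ : ι → K} (hδ : ∀ i, 0 < δ i)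
    (f : (ι → K) → M) (ζ ζ' : ι → ℤ) {x : ι → K}
    (hx : ∀ i, x i ∈ Set.Icc (x₀ i + δ i * ζ i) (x₀ i + δ i * ζ i + δ i))
    (hx' : ∀ i, x i ∈ Set.Icc (x₀ i + δ i * ζ' i) (x₀ i + δ i * ζ' i + δ i)) :
    boxInterp (fun i => x₀ i + δ i * ζ i) δ f x = boxInterp (fun i => x₀ i + δ i * ζ' i) δ f x :=
  (boxInterp_eq_latticeInterp x₀ hδ f ζ hx).trans (boxInterp_eq_latticeInterp x₀ hδ f ζ' hx').symm

end BoxInterpolation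

/-- On the mesh of hypercubes determined by the lattice `{x₀ + δζ : ζ ∈ ℤ^N}`, the
coordinatewise affine interpolation functions of two mesh hypercubes agree at every
point lying in both hypercubes. -/
theorem statement18 {N : ℕ} (hN : 1 ≤ N)
    (x₀ : Fin N → ℝ) (δ : ℝ) (hδ : 0 < δ)
    (f : (Fin N → ℝ) → ℝ)
    (ζ ζ' : Fin N → ℤ)
    (x : Fin N → ℝ)
    (hx : ∀ i, x i ∈ Set.Icc (x₀ i + δ * ζ i) (x₀ i + δ * ζ i + δ))
    (hx' : ∀ i, x i ∈ Set.Icc (x₀ i + δ * ζ' i) (x₀ i + δ * ζ' i + δ)) :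
    interpLam (fun i => x₀ i + δ * ζ i) δ f x = interpLam (fun i => x₀ i + δ * ζ' i) δ f x :=
  statement18_general x₀ (fun _ => hδ) f ζ ζ' hx hx'
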